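/- There is no function v : Fin 3 → Fin 3 → ℤ with v i j ∈ {−1, 1} for all i, j, such that every row has product +1 (v i 0 · v i 1 · v i 2 = 1 for each i ∈ Fin 3), the first two columns have product +1 (v 0 j · v 1 j · v 2 j = 1 for j = 0 and j = 1), and the third column has product −1 (v 0 2 · v 1 2 · v 2 2 = −1). -/

import Mathlib

/-- **Peres–Mermin parity argument.** There is no `±1`-valued assignment
`v : Fin 3 → Fin 3 → ℤ` such that every row has product `+1`, the first two columns have
product `+1`, and the third column has product `−1`. -/
theorem peres_mermin_no_value_assignment :
    ¬ ∃ v : Fin 3 → Fin 3 → ℤ,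
        (∀ i j, v i j = -1 ∨ v i j = 1) ∧
        (∀ i, v i 0 * v i 1 * v i 2 = 1) ∧
        (v 0 0 * v 1 0 * v 2 0 = 1) ∧
        (v 0 1 * v 1 1 * v 2 1 = 1) ∧
        (v 0 2 * v 1 2 * v 2 2 = -1) := by
  rintro ⟨v, -, hrow, hcol0, hcol1, hcol2⟩
  -- The product of all nine entries is `1` computed by rows and `-1` computed by columns.
  have key : (1 : ℤ) = -1 :=
    calc (1 : ℤ)
        = (v 0 0 * v 0 1 * v 0 2) * (v 1 0 * v 1 1 * v 1 2) * (v 2 0 * v 2 1 * v 2 2) := by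
          rw [hrow 0, hrow 1, hrow 2]; norm_num
      _ = (v 0 0 * v 1 0 * v 2 0) * (v 0 1 * v 1 1 * v 2 1) * (v 0 2 * v 1 2 * v 2 2) := by
          ring
      _ = -1 := by rw [hcol0, hcol1, hcol2]; norm_num
  norm_num at key
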